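/- Let d > 1 and let X be an ℝ^d-valued random variable with projection Lipschitz constant L_π and radial Lipschitz constant L_θ. Fix R > 0, ε > 0, δ > 0, and θ, φ ∈ S^{d-1}, and let X^(n) = (X_1,…,X_n) be points of ℝ^d with ‖X_i‖ ≤ R for all i ≤ n. If sup_{t ∈ ℝ} |F_θ(t) − F_{n,θ}(t)| < ε(1+δ)^{-1}, then sup_{t ∈ ℝ} |F_φ(t) − F_{n,φ}(t)| < ε(1+δ)^{-1} + L_θ·|θ−φ| + L_π·R·|θ−φ|. -/

import Mathlib

open MeasureTheory RealInnerProductSpace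

/-- The cdf of the projection of the random variable `X` in the direction `v`:
`F_v(t) = P(⟪X, v⟫ ≤ t)`. -/
noncomputable def projCdf {Ω : Type*} [MeasurableSpace Ω] {d : ℕ} (P : Measure Ω)
    (X : Ω → EuclideanSpace ℝ (Fin d)) (v : EuclideanSpace ℝ (Fin d)) (t : ℝ) : ℝ :=
  (P {ω | ⟪X ω, v⟫ ≤ t}).toReal

/-- The empirical cdf of a sample in the direction `v`:
`F_{n,v}(t) = n⁻¹ · #{i : ⟪Xs i, v⟫ ≤ t}`. -/
noncomputable def empCdf {d n : ℕ} (Xs : Fin n → EuclideanSpace ℝ (Fin d))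
    (v : EuclideanSpace ℝ (Fin d)) (t : ℝ) : ℝ :=
  (n : ℝ)⁻¹ * (Finset.univ.filter (fun i => ⟪Xs i, v⟫ ≤ t)).card

lemma aux_empCdf_mono {d n : ℕ} (Xs : Fin n → EuclideanSpace ℝ (Fin d))
    (u v : EuclideanSpace ℝ (Fin d)) (s t : ℝ)
    (h : ∀ i, ⟪Xs i, u⟫ ≤ s → ⟪Xs i, v⟫ ≤ t) : empCdf Xs u s ≤ empCdf Xs v t := by
  unfold empCdf
  apply mul_le_mul_of_nonneg_left _ (by positivity)
  exact_mod_cast Finset.card_le_card (Finset.monotone_filter_right _ (fun i _ hi => h i hi))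

lemma aux_empCdf_nonneg {d n : ℕ} (Xs : Fin n → EuclideanSpace ℝ (Fin d))
    (u : EuclideanSpace ℝ (Fin d)) (s : ℝ) : 0 ≤ empCdf Xs u s := by
  unfold empCdf
  positivity

lemma aux_empCdf_le_one {d n : ℕ} (Xs : Fin n → EuclideanSpace ℝ (Fin d))
    (u : EuclideanSpace ℝ (Fin d)) (s : ℝ) : empCdf Xs u s ≤ 1 := by
  unfold empCdf
  have h : ((Finset.univ.filter (fun i => ⟪Xs i, u⟫ ≤ s)).card : ℝ) ≤ n := by
    have := Finset.card_le_univ (Finset.univ.filter (fun i => ⟪Xs i, u⟫ ≤ s))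
    rw [Fintype.card_fin] at this
    exact_mod_cast this
  calc _ ≤ (n : ℝ)⁻¹ * n := mul_le_mul_of_nonneg_left h (by positivity)
    _ ≤ 1 := inv_mul_le_one

lemma aux_norm_sub_le {d : ℕ} (u v : EuclideanSpace ℝ (Fin d)) (hu : ‖u‖ = 1) (hv : ‖v‖ = 1) :
    ‖u - v‖ ≤ Real.arccos ⟪u, v⟫ := by
  have h1 := abs_le.1 (abs_real_inner_le_norm u v)
  rw [hu, hv] at h1
  have h2 := Real.cos_arccos (x := ⟪u, v⟫) (by linarith) (by linarith)
  have h3 := Real.one_sub_sq_div_two_le_cos (x := Real.arccos ⟪u, v⟫)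
  have h4 := norm_sub_sq_real u v
  rw [hu, hv] at h4
  apply le_of_sq_le_sq _ (Real.arccos_nonneg _)
  linarith

/-- If the sup-distance between `F_θ` and `F_{n,θ}` is less than `ε(1+δ)⁻¹`, then the
sup-distance between `F_φ` and `F_{n,φ}` is less than
`ε(1+δ)⁻¹ + L_θ·|θ−φ| + L_π·R·|θ−φ|`. -/
theorem supDist_proj_of_nearby_direction {d : ℕ} (hd1 : 1 < d)
    {Ω : Type*} [MeasurableSpace Ω] (P : Measure Ω) [IsProbabilityMeasure P]
    (X : Ω → EuclideanSpace ℝ (Fin d)) (hX : Measurable X)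
    (Lpi Lth : ℝ) (hLpi : 0 < Lpi) (hLth : 0 ≤ Lth)
    (hLipPi : ∀ v : EuclideanSpace ℝ (Fin d), ‖v‖ = 1 →
      ∀ s t : ℝ, |projCdf P X v s - projCdf P X v t| ≤ Lpi * |s - t|)
    (hLipTh : ∀ t : ℝ, ∀ u v : EuclideanSpace ℝ (Fin d), ‖u‖ = 1 → ‖v‖ = 1 →
      |projCdf P X u t - projCdf P X v t| ≤ Lth * Real.arccos ⟪u, v⟫)
    (R ε δ : ℝ) (hR : 0 < R) (hε : 0 < ε) (hδ : 0 < δ)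
    (θ φ : EuclideanSpace ℝ (Fin d)) (hθ : ‖θ‖ = 1) (hφ : ‖φ‖ = 1)
    {n : ℕ} (Xs : Fin n → EuclideanSpace ℝ (Fin d)) (hXs : ∀ i, ‖Xs i‖ ≤ R)
    (hsup : (⨆ t : ℝ, |projCdf P X θ t - empCdf Xs θ t|) < ε * (1 + δ)⁻¹) :
    (⨆ t : ℝ, |projCdf P X φ t - empCdf Xs φ t|) <
      ε * (1 + δ)⁻¹ + Lth * Real.arccos ⟪θ, φ⟫ + Lpi * R * Real.arccos ⟪θ, φ⟫ := by
  set a := Real.arccos ⟪θ, φ⟫ with ha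
  have ha0 : 0 ≤ a := Real.arccos_nonneg _
  have hclose : ∀ i, |⟪Xs i, θ⟫ - ⟪Xs i, φ⟫| ≤ R * a := by
    intro i
    rw [← inner_sub_right]
    exact (abs_real_inner_le_norm _ _).trans
      (mul_le_mul (hXs i) (aux_norm_sub_le θ φ hθ hφ) (norm_nonneg _) hR.le)
  have hbdd : BddAbove (Set.range fun t : ℝ => |projCdf P X θ t - empCdf Xs θ t|) := by
    refine ⟨1, ?_⟩
    rintro _ ⟨t, rfl⟩
    have h1 := aux_empCdf_nonneg Xs θ t
    have h2 := aux_empCdf_le_one Xs θ t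
    have h3 : 0 ≤ projCdf P X θ t := ENNReal.toReal_nonneg
    have h4 : projCdf P X θ t ≤ 1 := measureReal_le_one
    exact abs_le.2 ⟨by linarith, by linarith⟩
  have hle : (⨆ t : ℝ, |projCdf P X φ t - empCdf Xs φ t|) ≤
      (⨆ t : ℝ, |projCdf P X θ t - empCdf Xs θ t|) + Lth * a + Lpi * R * a := by
    apply ciSup_le
    intro t
    have e1 : empCdf Xs θ (t - R * a) ≤ empCdf Xs φ t :=
      aux_empCdf_mono _ _ _ _ _ fun i hi => by linarith [(abs_le.1 (hclose i)).1]
    have e2 : empCdf Xs φ t ≤ empCdf Xs θ (t + R * a) :=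
      aux_empCdf_mono _ _ _ _ _ fun i hi => by linarith [(abs_le.1 (hclose i)).2]
    have s1 := abs_le.1 (le_ciSup hbdd (t - R * a))
    have s2 := abs_le.1 (le_ciSup hbdd (t + R * a))
    have r := abs_le.1 (hLipTh t θ φ hθ hφ)
    have hRa : |R * a| = R * a := abs_of_nonneg (by positivity)
    have p1 := hLipPi θ hθ t (t - R * a)
    have p2 := hLipPi θ hθ (t + R * a) t
    rw [sub_sub_cancel, hRa, ← mul_assoc] at p1
    rw [add_sub_cancel_left, hRa, ← mul_assoc] at p2
    have p1 := abs_le.1 p1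
    have p2 := abs_le.1 p2
    rw [← ha] at r
    exact abs_le.2 ⟨by linarith [s2.1, r.2, p2.2], by linarith [s1.2, r.1, p1.2]⟩
  linarith
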